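/- arXiv:1709.09709 — 2 statements merged into one kernel-verified Lean document; each statement's English description precedes it below -/
import Mathlib

section
/- Let p > 1 and define f : [0, +∞) → ℝ by f(t) = t^(p-1)·ln(1 + t), and F(t) = ∫₀^t f(τ) dτ. Then for every θ > p there exists t > 0 such that θ·F(t) > t·f(t). -/
open Real

theorem model_nonlinearity_fails_AR
    (p : ℝ) (hp : 1 < p)
    (f : ℝ → ℝ) (hf : ∀ t : ℝ, 0 ≤ t → f t = t ^ (p - 1) * Real.log (1 + t))
    (F : ℝ → ℝ) (hF : ∀ t, F t = ∫ τ in (0 : ℝ)..t, f τ) :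
    ∀ θ : ℝ, p < θ → ∃ t : ℝ, 0 < t ∧ θ * F t > t * f t := by
  intro θ hθ
  have hp0 : 0 < p := by linarith
  have hd : 0 < θ - p := by linarith
  obtain ⟨t, ht⟩ : ∃ t, t = Real.exp (θ / (p * (θ - p))) := ⟨_, rfl⟩
  have ht0 : 0 < t := ht ▸ Real.exp_pos _
  have hlog : θ / (p * (θ - p)) < Real.log (1 + t) := by
    rw [Real.lt_log_iff_exp_lt (by linarith), ← ht]; linarith
  have hlogc : ContinuousOn (fun x : ℝ => Real.log (1 + x)) (Set.Icc 0 t) := by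
    apply ContinuousOn.log (by fun_prop)
    intro x hx
    have := hx.1
    positivity
  have hpow : ∀ q : ℝ, 0 ≤ q → ContinuousOn (fun x : ℝ => x ^ q) (Set.Icc 0 t) :=
    fun q hq => (Real.continuous_rpow_const hq).continuousOn
  have hfc : ContinuousOn f (Set.Icc 0 t) :=
    ((hpow (p - 1) (by linarith)).mul hlogc).congr (fun x hx => hf x hx.1)
  have key := intervalIntegral.sub_le_integral_of_hasDeriv_right_of_le (a := 0) (b := t)
    (g := fun x : ℝ => x ^ p * (Real.log (1 + x) / p - 1 / p ^ 2))
    (g' := fun x : ℝ => p * x ^ (p - 1) * (Real.log (1 + x) / p - 1 / p ^ 2)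
      + x ^ p * (1 / (1 + x) / p))
    (φ := f) ht0.le
    ((hpow p hp0.le).mul ((hlogc.div_const p).sub continuousOn_const))
    (by
      intro x hx
      have hx0 : 0 < x := hx.1
      have h1 := Real.hasDerivAt_rpow_const (x := x) (p := p) (Or.inl hx0.ne')
      have h2 : HasDerivAt (fun x : ℝ => Real.log (1 + x)) (1 / (1 + x)) x :=
        ((hasDerivAt_id x).const_add 1).log (by simp; positivity)
      exact (h1.mul ((h2.div_const p).sub_const (1 / p ^ 2))).hasDerivWithinAt)
    hfc.integrableOn_Icc
    (by
      intro x hx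
      have hx0 : 0 < x := hx.1
      have hxp : x ^ p = x ^ (p - 1) * x := by
        rw [← Real.rpow_add_one hx0.ne']; ring_nf
      rw [hf x hx0.le, hxp]
      have hA : 0 < x ^ (p - 1) := by positivity
      have : x ^ (p - 1) * Real.log (1 + x) - (p * x ^ (p - 1) * (Real.log (1 + x) / p - 1 / p ^ 2)
          + x ^ (p - 1) * x * (1 / (1 + x) / p)) = x ^ (p - 1) / (p * (1 + x)) := by
        field_simp
        ring
      have h3 : 0 < x ^ (p - 1) / (p * (1 + x)) := by positivity
      linarith)
  refine ⟨t, ht0, ?_⟩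
  rw [← hF] at key
  simp only [Real.zero_rpow hp0.ne', zero_mul, sub_zero] at key
  have htp : t ^ p = t ^ (p - 1) * t := by
    rw [← Real.rpow_add_one ht0.ne']; ring_nf
  have hT : 0 < t ^ p := by positivity
  have h4 := mul_le_mul_of_nonneg_left key (by linarith : 0 ≤ θ)
  have h5 : t * f t = t ^ p * Real.log (1 + t) := by rw [hf t ht0.le, htp]; ring
  have h6 : θ * (t ^ p * (Real.log (1 + t) / p - 1 / p ^ 2)) - t ^ p * Real.log (1 + t)
      = t ^ p * ((θ - p) / p) * (Real.log (1 + t) - θ / (p * (θ - p))) := by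
    have := hd.ne'
    field_simp
    ring
  have h7 : 0 < t ^ p * ((θ - p) / p) * (Real.log (1 + t) - θ / (p * (θ - p))) :=
    mul_pos (by positivity) (by linarith)
  rw [h5]
  linarith
end

section
/- Let N ≥ 1, p, q > 1 and α, β > 0 with α/p + β/q = 1. Let λ, λ₀ : ℝ^N → ℝ be bounded measurable functions such that λ(x) − λ₀(x) → 0 as |x| → +∞. Let (u_n), (v_n) be sequences of measurable functions ℝ^N → ℝ such that sup_n ∫_{ℝ^N} |u_n|^p dx < +∞, sup_n ∫_{ℝ^N} |v_n|^q dx < +∞, and, for every R > 0, ∫_{B_R(0)} |u_n|^p dx → 0 as n → +∞. Then ∫_{ℝ^N} (λ(x) − λ₀(x))·|u_n(x)|^α·|v_n(x)|^β dx → 0 as n → +∞. -/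
open Real MeasureTheory Filter

lemma holder_aux {X : Type*} [MeasurableSpace X] (μ : Measure X) (F G : X → ℝ)
    (hF : ∀ x, 0 ≤ F x) (hG : ∀ x, 0 ≤ G x) (hFm : Measurable F) (hGm : Measurable G)
    (hFi : Integrable F μ) (hGi : Integrable G μ) (a b : ℝ) (ha : 0 < a) (hb : 0 < b)
    (hab : a + b = 1) :
    Integrable (fun x => F x ^ a * G x ^ b) μ ∧
      ∫ x, F x ^ a * G x ^ b ∂μ ≤ (∫ x, F x ∂μ) ^ a * (∫ x, G x ∂μ) ^ b := by
  have hnn : ∀ x, 0 ≤ F x ^ a * G x ^ b := fun x =>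
    mul_nonneg (rpow_nonneg (hF x) _) (rpow_nonneg (hG x) _)
  have hm : Measurable (fun x => F x ^ a * G x ^ b) :=
    (hFm.pow_const a).mul (hGm.pow_const b)
  have hi : Integrable (fun x => F x ^ a * G x ^ b) μ := by
    refine ((hFi.const_mul a).add (hGi.const_mul b)).mono' hm.aestronglyMeasurable ?_
    refine Eventually.of_forall fun x => ?_
    rw [Real.norm_of_nonneg (hnn x)]
    exact Real.geom_mean_le_arith_mean2_weighted ha.le hb.le (hF x) (hG x) hab
  refine ⟨hi, ?_⟩
  have IF : 0 ≤ ∫ x, F x ∂μ := integral_nonneg hF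
  have IG : 0 ≤ ∫ x, G x ∂μ := integral_nonneg hG
  have key := ENNReal.lintegral_mul_norm_pow_le (μ := μ) (hFm.ennreal_ofReal.aemeasurable)
    (hGm.ennreal_ofReal.aemeasurable) ha.le hb.le hab
  rw [← ofReal_integral_eq_lintegral_ofReal hFi (Eventually.of_forall hF),
    ← ofReal_integral_eq_lintegral_ofReal hGi (Eventually.of_forall hG),
    ENNReal.ofReal_rpow_of_nonneg IF ha.le, ENNReal.ofReal_rpow_of_nonneg IG hb.le,
    ← ENNReal.ofReal_mul (rpow_nonneg IF _)] at key
  have e : ∀ x, ENNReal.ofReal (F x) ^ a * ENNReal.ofReal (G x) ^ b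
      = ENNReal.ofReal (F x ^ a * G x ^ b) := fun x => by
    rw [ENNReal.ofReal_rpow_of_nonneg (hF x) ha.le, ENNReal.ofReal_rpow_of_nonneg (hG x) hb.le,
      ENNReal.ofReal_mul (rpow_nonneg (hF x) _)]
  simp_rw [e] at key
  rw [← ofReal_integral_eq_lintegral_ofReal hi (Eventually.of_forall hnn)] at key
  exact (ENNReal.ofReal_le_ofReal_iff
    (mul_nonneg (rpow_nonneg IF _) (rpow_nonneg IG _))).1 key

theorem asymptotically_periodic_coupling_term_vanishes
    {N : ℕ} (hN : 1 ≤ N) (p q α β : ℝ)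
    (hp : 1 < p) (hq : 1 < q) (hα : 0 < α) (hβ : 0 < β)
    (hsum : α / p + β / q = 1)
    (lam lam₀ : EuclideanSpace ℝ (Fin N) → ℝ)
    (hlmeas : Measurable lam) (hl₀meas : Measurable lam₀)
    (C : ℝ) (hlbd : ∀ x, |lam x| ≤ C) (hl₀bd : ∀ x, |lam₀ x| ≤ C)
    (hdecay : ∀ ε : ℝ, 0 < ε → ∃ R : ℝ, ∀ x : EuclideanSpace ℝ (Fin N),
      R ≤ ‖x‖ → |lam x - lam₀ x| < ε)
    (u v : ℕ → EuclideanSpace ℝ (Fin N) → ℝ)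
    (humeas : ∀ n, Measurable (u n)) (hvmeas : ∀ n, Measurable (v n))
    (huint : ∀ n, Integrable (fun x => |u n x| ^ p))
    (hvint : ∀ n, Integrable (fun x => |v n x| ^ q))
    (M : ℝ) (hubdd : ∀ n, (∫ x, |u n x| ^ p) ≤ M) (hvbdd : ∀ n, (∫ x, |v n x| ^ q) ≤ M)
    (hloc : ∀ R : ℝ, 0 < R →
      Tendsto (fun n => ∫ x in Metric.ball (0 : EuclideanSpace ℝ (Fin N)) R, |u n x| ^ p)
        atTop (nhds 0)) :
    Tendsto (fun n => ∫ x, (lam x - lam₀ x) * |u n x| ^ α * |v n x| ^ β)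
      atTop (nhds 0) := by
  have hp0 : 0 < p := by linarith
  have hq0 : 0 < q := by linarith
  have ha : 0 < α / p := by positivity
  have hb : 0 < β / q := by positivity
  set F : ℕ → EuclideanSpace ℝ (Fin N) → ℝ := fun n x => |u n x| ^ p with hFdef
  set G : ℕ → EuclideanSpace ℝ (Fin N) → ℝ := fun n x => |v n x| ^ q with hGdef
  have hF : ∀ n x, 0 ≤ F n x := fun n x => rpow_nonneg (abs_nonneg _) _
  have hG : ∀ n x, 0 ≤ G n x := fun n x => rpow_nonneg (abs_nonneg _) _
  have hFm : ∀ n, Measurable (F n) := fun n => (measurable_norm.comp (humeas n)).pow_const p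
  have hGm : ∀ n, Measurable (G n) := fun n => (measurable_norm.comp (hvmeas n)).pow_const q
  have hh : ∀ n x, |u n x| ^ α * |v n x| ^ β = F n x ^ (α / p) * G n x ^ (β / q) := fun n x => by
    simp only [hFdef, hGdef]
    rw [← rpow_mul (abs_nonneg _), ← rpow_mul (abs_nonneg _), mul_div_cancel₀ _ hp0.ne',
      mul_div_cancel₀ _ hq0.ne']
  set h : ℕ → EuclideanSpace ℝ (Fin N) → ℝ := fun n x => F n x ^ (α / p) * G n x ^ (β / q)
    with hhdef
  have hh0 : ∀ n x, 0 ≤ h n x := fun n x =>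
    mul_nonneg (rpow_nonneg (hF n x) _) (rpow_nonneg (hG n x) _)
  have H := fun n => holder_aux volume (F n) (G n) (hF n) (hG n) (hFm n) (hGm n) (huint n)
    (hvint n) _ _ ha hb hsum
  have IF : ∀ n, 0 ≤ ∫ x, F n x := fun n => integral_nonneg (hF n)
  have IG : ∀ n, 0 ≤ ∫ x, G n x := fun n => integral_nonneg (hG n)
  have hM : 0 ≤ M := (IF 0).trans (hubdd 0)
  have hC : 0 ≤ C := (abs_nonneg _).trans (hlbd 0)
  have Hle : ∀ n, ∫ x, h n x ≤ M := fun n => by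
    refine (H n).2.trans ?_
    calc _ ≤ M ^ (α / p) * M ^ (β / q) := by
          gcongr
          · exact hubdd n
          · exact hvbdd n
      _ = M := by rw [← rpow_add_of_nonneg hM ha.le hb.le, hsum, rpow_one]
  rw [Metric.tendsto_atTop]
  intro ε hε
  obtain ⟨R₀, hR₀⟩ := hdecay (ε / (2 * (M + 1))) (by positivity)
  set R := max R₀ 1
  have hR : 0 < R := lt_of_lt_of_le one_pos (le_max_right _ _)
  set B := Metric.ball (0 : EuclideanSpace ℝ (Fin N)) R with hB
  have HB : ∀ n, ∫ x in B, h n x ≤ (∫ x in B, F n x) ^ (α / p) * M ^ (β / q) := fun n => by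
    refine (holder_aux (volume.restrict B) (F n) (G n) (hF n) (hG n) (hFm n) (hGm n)
      (huint n).integrableOn (hvint n).integrableOn _ _ ha hb hsum).2.trans ?_
    have h1 : 0 ≤ ∫ x in B, F n x := integral_nonneg (hF n)
    have h2 : 0 ≤ ∫ x in B, G n x := integral_nonneg (hG n)
    have h3 : ∫ x in B, G n x ≤ M :=
      (setIntegral_le_integral (hvint n) (Eventually.of_forall (hG n))).trans (hvbdd n)
    gcongr
  have hlim : Tendsto (fun n => 2 * C * ((∫ x in B, F n x) ^ (α / p) * M ^ (β / q)))
      atTop (nhds 0) := by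
    have := (((hloc R hR).rpow_const (p := α / p) (Or.inr ha.le)).mul_const
      (M ^ (β / q))).const_mul (2 * C)
    simpa [zero_rpow ha.ne'] using this
  obtain ⟨n₀, hn₀⟩ := eventually_atTop.1 (hlim.eventually (gt_mem_nhds (half_pos hε)))
  refine ⟨n₀, fun n hn => ?_⟩
  rw [dist_zero_right]
  have hBm : MeasurableSet B := Metric.isOpen_ball.measurableSet
  have i1 : Integrable (fun x => 2 * C * B.indicator (h n) x) :=
    ((H n).1.indicator hBm).const_mul _
  have i2 : Integrable (fun x => ε / (2 * (M + 1)) * h n x) := (H n).1.const_mul _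
  have hb : ‖∫ x, (lam x - lam₀ x) * |u n x| ^ α * |v n x| ^ β‖ ≤
      ∫ x, (2 * C * B.indicator (h n) x + ε / (2 * (M + 1)) * h n x) := by
    refine norm_integral_le_of_norm_le (i1.add i2) (Eventually.of_forall fun x => ?_)
    rw [mul_assoc, hh, norm_mul, Real.norm_eq_abs, Real.norm_of_nonneg (hh0 n x)]
    change _ * h n x ≤ _
    have h0 := hh0 n x
    by_cases hx : x ∈ B
    · rw [Set.indicator_of_mem hx]
      have h1 : |lam x - lam₀ x| ≤ 2 * C := by
        have := abs_sub (lam x) (lam₀ x)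
        linarith [hlbd x, hl₀bd x]
      have h2 : 0 ≤ ε / (2 * (M + 1)) * h n x := by positivity
      nlinarith [mul_le_mul_of_nonneg_right h1 h0]
    · rw [Set.indicator_of_notMem hx]
      have h1 : R₀ ≤ ‖x‖ := by
        simp only [hB, Metric.mem_ball, dist_zero_right, not_lt] at hx
        exact (le_max_left _ _).trans hx
      have := mul_le_mul_of_nonneg_right (hR₀ x h1).le h0
      linarith
  rw [integral_add i1 i2, integral_const_mul, integral_const_mul, integral_indicator hBm] at hb
  have e1 := mul_le_mul_of_nonneg_left (HB n) (by positivity : 0 ≤ 2 * C)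
  have e2 := hn₀ n hn
  have e3 : ε / (2 * (M + 1)) * ∫ x, h n x ≤ ε / 2 := by
    calc _ ≤ ε / (2 * (M + 1)) * (M + 1) := by
          gcongr
          linarith [Hle n]
      _ = ε / 2 := by field_simp
  linarith
end
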